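/- arXiv:1302.6094 — 2 statements merged into one kernel-verified Lean document; each statement's English description precedes it below -/
import Mathlib

section
/- For every integer d > 2 there exists a constant C (depending only on d) such that for all integers H ≥ 1, |F_d(H) − ρ_d · 2^{d+1} · H^{d+1}| ≤ C · H^d. -/
/-!
Write `τ(s)` for the number of divisors of `s`. For squarefree `s`, a vector `a` satisfies the
Eisenstein condition at every prime `p ∣ s` exactly when `s ∣ a i` for `i < d`, the quotient
`a 0 / s` is coprime to `s`, and `a d` is coprime to `s` (`forall_coordCond_iff`). These conditions
concern one coordinate each, so the number `N(s, H)` of such vectors in the box `[-H, H]^(d+1)`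
(`sieveCount`) is a product of `d + 1` one-dimensional counts (`sieveCount_eq`). Since the
Eisenstein condition forces `a 0 ≠ 0`, all relevant `s` are at most `H`, and Möbius inversion gives
`F_d(H) + ∑_{1 ≤ s ≤ H} μ(s) N(s, H) = (2H + 1)^(d+1)` (`Fcount_add_sum`).

The number of integers in `[-N, N]` coprime to `s` is `2Nφ(s)/s` up to `τ(s)`
(`abs_card_coprime_sub_le`), the number of multiples of `s` is `2N/s` up to `1`, and
`τ(s) ≤ 2√s`. Multiplying, one gets
`μ(s) N(s, H) = (2H)^(d+1) μ(s)φ(s)²/s^(d+2) + O(H^d √s/s^(d-1))` for `1 ≤ s ≤ H`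
(`abs_sieveCount_sub_le`), while for `s > H` the main term alone is
already of that size (`abs_main_term_le`). As `d ≥ 3`, the errors are dominated by the convergent
series `∑ √s/s²`, so the total error is `O(H^d)`. The series `∑ μ(s)φ(s)²/s^(d+2)` of main terms
equals `1 - ρ_d` by its Euler product (`tprod_eq_tsum_eisTerm`), and
`(2H + 1)^(d+1) = (2H)^(d+1) + O(H^d)`.
-/


/-- `ρ_d = 1 - ∏_p (1 - (p-1)^2/p^(d+2))`, product over all primes. -/
noncomputable def rho (d : ℕ) : ℝ :=
  1 - ∏' p : Nat.Primes, (1 - (((p : ℕ) : ℝ) - 1) ^ 2 / ((p : ℕ) : ℝ) ^ (d + 2))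

/-- `F_d(H)`: number of Eisenstein polynomials (monic or not) of degree `d`
and height at most `H`. A polynomial is represented by its coefficient vector
`a : Fin (d+1) → ℤ`, with `a i` the coefficient of `X^i`. (The Eisenstein condition
`p ∤ a_d` forces `a_d ≠ 0`, i.e. degree exactly `d`.) -/
noncomputable def Fcount (d H : ℕ) : ℕ :=
  Nat.card {a : Fin (d + 1) → ℤ //
    (∀ i : Fin (d + 1), |a i| ≤ (H : ℤ)) ∧
    ∃ p : ℕ, p.Prime ∧ (∀ i : Fin (d + 1), i.val < d → (p : ℤ) ∣ a i) ∧
      ¬ ((p : ℤ) ^ 2 ∣ a 0) ∧ ¬ ((p : ℤ) ∣ a (Fin.last d))}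

section

open Finset ArithmeticFunction
open scoped ArithmeticFunction.Moebius

/-! ### Counting multiples and coprime integers in an interval -/

/-- Dividing by `e` maps the multiples of `e` in `[-N, N]` bijectively onto `[-⌊N/e⌋, ⌊N/e⌋]`;
a condition `P` on the quotient is carried along. -/
theorem card_multiples (N e : ℕ) (he : 0 < e) (P : ℤ → Prop) [DecidablePred P] :
    #{x ∈ Icc (-(N : ℤ)) N | (e : ℤ) ∣ x ∧ P (x / e)} =
      #{k ∈ Icc (-((N / e : ℕ) : ℤ)) ((N / e : ℕ) : ℤ) | P k} := by
  have he' : (0 : ℤ) < e := by exact_mod_cast he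
  have key : ∀ k : ℤ, (-(N : ℤ) ≤ e * k ∧ e * k ≤ N) ↔
      (-((N / e : ℕ) : ℤ) ≤ k ∧ k ≤ ((N / e : ℕ) : ℤ)) := by
    intro k
    push_cast
    rw [Int.le_ediv_iff_mul_le he', neg_le, neg_le (b := k), Int.le_ediv_iff_mul_le he',
      mul_comm k, neg_mul, mul_comm k]
  symm
  apply Finset.card_bij (fun k _ => (e : ℤ) * k)
  · intro k hk
    rw [mem_filter, mem_Icc] at hk ⊢
    exact ⟨(key k).2 hk.1, dvd_mul_right _ _, by rw [Int.mul_ediv_cancel_left _ he'.ne']; exact hk.2⟩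
  · intro a _ b _ h
    exact mul_left_cancel₀ he'.ne' h
  · intro x hx
    rw [mem_filter, mem_Icc] at hx
    obtain ⟨h1, ⟨k, rfl⟩, h3⟩ := hx
    rw [Int.mul_ediv_cancel_left _ he'.ne'] at h3
    exact ⟨k, by rw [mem_filter, mem_Icc]; exact ⟨(key k).1 h1, h3⟩, rfl⟩

theorem card_dvd (N e : ℕ) (he : 0 < e) :
    #{x ∈ Icc (-(N : ℤ)) N | (e : ℤ) ∣ x} = 2 * (N / e) + 1 := by
  have := card_multiples N e he (fun _ => True)
  simp only [and_true, filter_true, Int.card_Icc] at this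
  omega

theorem abs_card_dvd_sub_le (N e : ℕ) (he : 0 < e) :
    |(#{x ∈ Icc (-(N : ℤ)) N | (e : ℤ) ∣ x} : ℝ) - 2 * ((N : ℝ) / e)| ≤ 1 := by
  rw [card_dvd N e he, ← Nat.floor_div_eq_div (K := ℝ) N e]
  have h1 := Nat.floor_le (a := (N : ℝ) / e) (by positivity)
  have h2 := Nat.lt_floor_add_one ((N : ℝ) / e)
  push_cast
  rw [abs_le]; constructor <;> linarith

theorem sum_moebius_divisors (n : ℕ) :
    ∑ e ∈ n.divisors, μ e = if n = 1 then 1 else 0 := by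
  have := congrArg (fun f => f n) coe_zeta_mul_moebius
  rw [coe_zeta_mul_apply, one_apply] at this
  exact this

/-- Möbius inversion of `∑_{e ∣ s} φ(e) = s`. -/
theorem totient_div_eq (s : ℕ) (hs : 0 < s) :
    (s.totient : ℝ) / s = ∑ e ∈ s.divisors, (μ e : ℝ) / e := by
  have h := (sum_eq_iff_sum_mul_moebius_eq (R := ℝ) (f := fun n => (n.totient : ℝ))
    (g := fun n => (n : ℝ))).1 (fun n _ => by
      have := Nat.sum_totient n
      exact_mod_cast this) s hs
  rw [← h, Nat.sum_divisorsAntidiagonal (fun i j => (μ i : ℝ) * (j : ℝ)), Finset.sum_div]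
  refine Finset.sum_congr rfl fun e he => ?_
  have hd := Nat.dvd_of_mem_divisors he
  have he0 : (e : ℝ) ≠ 0 := by
    have := Nat.pos_of_mem_divisors he
    positivity
  rw [Nat.cast_div hd he0]
  have : (s : ℝ) ≠ 0 := by positivity
  field_simp

/-- Legendre sieve: the indicator of `gcd(x, s) = 1` is `∑_{e ∣ gcd(x, s)} μ(e)`, and each of the
divisors `e` of `s` contributes an error of at most `1`. -/
theorem abs_card_coprime_sub_le (N s : ℕ) (hs : 0 < s) :
    |(#{x ∈ Icc (-(N : ℤ)) N | Nat.Coprime x.natAbs s} : ℝ) - 2 * N * (s.totient / s)|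
      ≤ #s.divisors := by
  have h1 : ((#{x ∈ Icc (-(N : ℤ)) N | Nat.Coprime x.natAbs s} : ℕ) : ℤ) =
      ∑ e ∈ s.divisors, μ e * #{x ∈ Icc (-(N : ℤ)) N | (e : ℤ) ∣ x} := by
    have h2 : ∀ x : ℤ, (if Nat.Coprime x.natAbs s then (1 : ℤ) else 0) =
        ∑ e ∈ s.divisors, if (e : ℤ) ∣ x then μ e else 0 := by
      intro x
      rw [← Finset.sum_filter]
      refine (sum_moebius_divisors _).symm.trans ?_
      refine Finset.sum_congr ?_ fun _ _ => rfl
      ext e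
      simp [Nat.dvd_gcd_iff, Int.natCast_dvd, hs.ne', and_comm]
    rw [Finset.card_filter]
    push_cast
    rw [Finset.sum_congr rfl fun x _ => h2 x, Finset.sum_comm]
    refine Finset.sum_congr rfl fun e _ => ?_
    rw [← Finset.sum_filter, Finset.sum_const, nsmul_eq_mul, mul_comm]
  have h3 : (#{x ∈ Icc (-(N : ℤ)) N | Nat.Coprime x.natAbs s} : ℝ) =
      ∑ e ∈ s.divisors, (μ e : ℝ) * #{x ∈ Icc (-(N : ℤ)) N | (e : ℤ) ∣ x} := by
    exact_mod_cast h1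
  rw [h3, totient_div_eq s hs, Finset.mul_sum, ← Finset.sum_sub_distrib, Finset.card_eq_sum_ones]
  push_cast
  refine (Finset.abs_sum_le_sum_abs _ _).trans (Finset.sum_le_sum fun e he => ?_)
  have hm : |(μ e : ℝ)| ≤ 1 := by exact_mod_cast abs_moebius_le_one (n := e)
  have hd := abs_card_dvd_sub_le N e (Nat.pos_of_mem_divisors he)
  rw [show (μ e : ℝ) * (#{x ∈ Icc (-(N : ℤ)) N | (e : ℤ) ∣ x} : ℝ) - 2 * N * (μ e / e) =
    μ e * ((#{x ∈ Icc (-(N : ℤ)) N | (e : ℤ) ∣ x} : ℝ) - 2 * ((N : ℝ) / e)) by ring, abs_mul]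
  exact mul_le_one₀ hm (abs_nonneg _) hd

/-- Every divisor `e` of `n` satisfies `e ≤ √n` or `n / e ≤ √n`. -/
theorem card_divisors_le_two_mul_sqrt (n : ℕ) : #n.divisors ≤ 2 * n.sqrt := by
  have hsub : n.divisors ⊆ Icc 1 n.sqrt ∪ (Icc 1 n.sqrt).image (n / ·) := by
    intro e he
    have hpos := Nat.pos_of_mem_divisors he
    obtain ⟨⟨k, hk⟩, hn⟩ := Nat.mem_divisors.1 he
    have hk0 : 0 < k := by
      rcases Nat.eq_zero_or_pos k with h | h
      · subst h; simp at hk; exact absurd hk hn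
      · exact h
    rw [mem_union, mem_image, mem_Icc]
    rcases le_total e k with h | h
    · left
      exact ⟨hpos, Nat.le_sqrt.2 (hk ▸ Nat.mul_le_mul_left e h)⟩
    · right
      refine ⟨k, mem_Icc.2 ⟨hk0, Nat.le_sqrt.2 (hk ▸ Nat.mul_le_mul_right k h)⟩, ?_⟩
      rw [hk]; exact Nat.mul_div_cancel _ hk0
  refine (card_le_card hsub).trans ((card_union_le _ _).trans ?_)
  have := (card_image_le (s := Icc 1 n.sqrt) (f := (n / ·)))
  simp only [Nat.card_Icc] at this ⊢
  omega

theorem card_divisors_le_sqrt (n : ℕ) : (#n.divisors : ℝ) ≤ 2 * √(n : ℝ) := by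
  calc (#n.divisors : ℝ) ≤ ((2 * n.sqrt : ℕ) : ℝ) := by exact_mod_cast card_divisors_le_two_mul_sqrt n
    _ ≤ _ := by push_cast; gcongr; exact Real.nat_sqrt_le_real_sqrt

/-! ### Inclusion-exclusion over squarefree moduli -/

/-- The polynomial with coefficient vector `a` satisfies the Eisenstein condition at `p`. Primality
of `p` is not part of the definition. -/
def IsEisAt (d p : ℕ) (a : Fin (d + 1) → ℤ) : Prop :=
  (∀ i : Fin (d + 1), i.val < d → (p : ℤ) ∣ a i) ∧
    ¬ ((p : ℤ) ^ 2 ∣ a 0) ∧ ¬ ((p : ℤ) ∣ a (Fin.last d))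

/-- The condition imposed on the coefficient `x` of `X^i` by requiring the Eisenstein condition at
all primes dividing a squarefree `s`. It makes sense for `0 < d`, when the first and the last
coefficient are distinct. -/
def CoordCond (d s : ℕ) (i : Fin (d + 1)) (x : ℤ) : Prop :=
  if i = 0 then (s : ℤ) ∣ x ∧ Nat.Coprime (x / s).natAbs s
  else if i = Fin.last d then Nat.Coprime x.natAbs s
  else (s : ℤ) ∣ x

theorem squarefree_dvd_of_forall_prime {s : ℕ} (hs : Squarefree s) {x : ℤ}
    (h : ∀ p : ℕ, p.Prime → p ∣ s → (p : ℤ) ∣ x) : (s : ℤ) ∣ x := by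
  rw [Int.natCast_dvd, ← Nat.prod_primeFactors_of_squarefree hs]
  refine Finset.prod_primes_dvd _ (fun p hp => (Nat.prime_of_mem_primeFactors hp).prime) fun p hp => ?_
  exact Int.natCast_dvd.1 (h p (Nat.prime_of_mem_primeFactors hp) (Nat.dvd_of_mem_primeFactors hp))

theorem forall_coordCond_iff (d : ℕ) (hd : 0 < d) {s : ℕ} (hs : Squarefree s)
    (a : Fin (d + 1) → ℤ) :
    (∀ i, CoordCond d s i (a i)) ↔ ∀ p : ℕ, p.Prime → p ∣ s → IsEisAt d p a := by
  have hl0 : Fin.last d ≠ 0 := by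
    intro h; have := congrArg Fin.val h; simp at this; omega
  have hs0 : s ≠ 0 := hs.ne_zero
  constructor
  · intro h p hp hps
    have h0 := h 0
    have hl := h (Fin.last d)
    simp only [CoordCond, if_true] at h0
    simp only [CoordCond, hl0, if_true, if_false] at hl
    have hps' : (p : ℤ) ∣ s := by exact_mod_cast hps
    refine ⟨fun i hi => ?_, fun hsq => ?_, fun hpl => ?_⟩
    · have hi' := h i
      have hil : i ≠ Fin.last d := by rintro rfl; simp at hi
      by_cases hi0 : i = 0
      · subst hi0; exact hps'.trans h0.1
      · simp only [CoordCond, hi0, hil, if_false] at hi'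
        exact hps'.trans hi'
    · obtain ⟨⟨k, hk⟩, hc⟩ := h0
      rw [hk, Int.mul_ediv_cancel_left _ (by exact_mod_cast hs0)] at hc
      obtain ⟨t, rfl⟩ := hps
      have hpt : p ∣ t * k.natAbs := by
        rw [hk, ← Int.natCast_pow, Int.natCast_dvd, Int.natAbs_mul, Int.natAbs_natCast, pow_two,
          mul_assoc] at hsq
        exact Nat.dvd_of_mul_dvd_mul_left hp.pos hsq
      -- `s = p * t` is squarefree and `k` is coprime to `s`, so `p` divides neither `t` nor `k`
      rcases hp.dvd_mul.1 hpt with h | h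
      · exact hp.one_lt.ne' (Nat.isUnit_iff.1 (hs p (Nat.mul_dvd_mul_left p h)))
      · exact Nat.not_coprime_of_dvd_of_dvd hp.one_lt h (dvd_mul_right p t) hc
    · exact Nat.not_coprime_of_dvd_of_dvd hp.one_lt (Int.natCast_dvd.1 hpl) hps hl
  · intro h i
    have hdvd : ∀ i : Fin (d + 1), i.val < d → (s : ℤ) ∣ a i := fun i hi =>
      squarefree_dvd_of_forall_prime hs fun p hp hps => (h p hp hps).1 i hi
    unfold CoordCond
    split_ifs with h0 hl
    · subst h0
      have hd0 := hdvd 0 hd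
      refine ⟨hd0, ?_⟩
      obtain ⟨k, hk⟩ := hd0
      rw [hk, Int.mul_ediv_cancel_left _ (by exact_mod_cast hs0)]
      refine Nat.coprime_of_dvd fun p hp hpk hps => (h p hp hps).2.1 ?_
      rw [hk, pow_two]
      exact mul_dvd_mul (by exact_mod_cast hps) (Int.natCast_dvd.2 hpk)
    · subst hl
      exact Nat.coprime_of_dvd fun p hp hpk hps => (h p hp hps).2.2 (Int.natCast_dvd.2 hpk)
    · refine hdvd i ?_
      have := i.is_lt
      have h' : i.val ≠ d := fun h => hl (Fin.ext h)
      omega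

theorem IsEisAt.le {d H p : ℕ} (hd : 0 < d) {a : Fin (d + 1) → ℤ} (ha : (a 0).natAbs ≤ H)
    (h : IsEisAt d p a) : p ≤ H := by
  have h0 : a 0 ≠ 0 := fun h0 => h.2.1 (h0 ▸ dvd_zero _)
  exact (Nat.le_of_dvd (Int.natAbs_pos.2 h0) (Int.natCast_dvd.1 (h.1 0 hd))).trans ha

open Classical in
/-- The squarefree `s` for which `a` satisfies all the conditions `CoordCond` are the divisors of the
product `m` of the primes at which `a` is Eisenstein, so the Möbius sum over them detects `m = 1`.
The range `s ≤ H` suffices: either `m = 1`, or `a 0 ≠ 0` and `m ∣ a 0`. -/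
theorem sum_moebius_coordCond (d H : ℕ) (hd : 0 < d) (hH : 1 ≤ H) (a : Fin (d + 1) → ℤ)
    (ha : (a 0).natAbs ≤ H) :
    ∑ s ∈ Icc 1 H, (if ∀ i, CoordCond d s i (a i) then μ s else 0) =
      if ∃ p : ℕ, p.Prime ∧ IsEisAt d p a then 0 else 1 := by
  set P : Finset ℕ := {p ∈ range (H + 1) | p.Prime ∧ IsEisAt d p a} with hP
  have hPmem : ∀ p, p ∈ P ↔ p.Prime ∧ IsEisAt d p a := by
    intro p
    rw [hP, mem_filter, mem_range]
    exact ⟨fun h => h.2, fun h => ⟨Nat.lt_succ_of_le (h.2.le hd ha), h⟩⟩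
  set m := ∏ p ∈ P, p with hm
  have hm0 : m ≠ 0 := Finset.prod_ne_zero_iff.2 fun p hp => ((hPmem p).1 hp).1.ne_zero
  have hprime : ∀ p, p.Prime → (p ∣ m ↔ p ∈ P) := by
    intro p hp
    rw [hm, hp.prime.dvd_finsetProd_iff]
    refine ⟨fun ⟨q, hq, hpq⟩ => ?_, fun h => ⟨p, h, dvd_rfl⟩⟩
    rwa [(Nat.prime_dvd_prime_iff_eq hp ((hPmem q).1 hq).1).1 hpq]
  have hmH : m ≤ H := by
    rcases P.eq_empty_or_nonempty with h | ⟨p, hp⟩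
    · rw [hm, h, prod_empty]; exact hH
    · have h0 : a 0 ≠ 0 := fun h0 => ((hPmem p).1 hp).2.2.1 (h0 ▸ dvd_zero _)
      refine (Nat.le_of_dvd (Int.natAbs_pos.2 h0) ?_).trans ha
      exact Finset.prod_primes_dvd _ (fun q hq => ((hPmem q).1 hq).1.prime) fun q hq =>
        Int.natCast_dvd.1 (((hPmem q).1 hq).2.1 0 hd)
  have hiff : ∀ s, Squarefree s → ((∀ i, CoordCond d s i (a i)) ↔ s ∣ m) := by
    intro s hs
    rw [forall_coordCond_iff d hd hs]
    constructor
    · intro h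
      have : (s : ℤ) ∣ (m : ℤ) := squarefree_dvd_of_forall_prime hs fun p hp hps => by
        exact_mod_cast (hprime p hp).2 ((hPmem p).2 ⟨hp, h p hp hps⟩)
      exact_mod_cast this
    · intro h p hp hps
      exact ((hPmem p).1 ((hprime p hp).1 (hps.trans h))).2
  have hterm : ∀ s ∈ Icc 1 H, (if ∀ i, CoordCond d s i (a i) then μ s else 0) =
      if s ∣ m then μ s else 0 := by
    intro s _
    by_cases hs : Squarefree s
    · exact if_congr (hiff s hs) rfl rfl
    · simp [moebius_eq_zero_of_not_squarefree hs]
  rw [Finset.sum_congr rfl hterm, ← Finset.sum_filter]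
  have hset : {s ∈ Icc 1 H | s ∣ m} = m.divisors := by
    ext s
    rw [mem_filter, mem_Icc, Nat.mem_divisors]
    refine ⟨fun h => ⟨h.2, hm0⟩, fun h => ⟨⟨Nat.pos_of_dvd_of_pos h.1 (Nat.pos_of_ne_zero hm0),
      (Nat.le_of_dvd (Nat.pos_of_ne_zero hm0) h.1).trans hmH⟩, h.1⟩⟩
  rw [hset, sum_moebius_divisors m]
  by_cases h : ∃ p : ℕ, p.Prime ∧ IsEisAt d p a
  · obtain ⟨p, hp⟩ := h
    have : m ≠ 1 := fun h1 => hp.1.one_lt.ne' (Nat.dvd_one.1 (h1 ▸ (hprime p hp.1).2 ((hPmem p).2 hp)))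
    rw [if_neg this, if_pos ⟨p, hp⟩]
  · have : m = 1 := by
      rw [hm]
      exact Finset.prod_eq_one fun p hp => absurd ⟨p, (hPmem p).1 hp⟩ h
    rw [if_pos this, if_neg h]

open Classical in
theorem Fcount_eq (d H : ℕ) : Fcount d H =
    #{a ∈ Fintype.piFinset fun _ : Fin (d + 1) => Icc (-(H : ℤ)) H |
      ∃ p : ℕ, p.Prime ∧ IsEisAt d p a} := by
  refine Nat.subtype_card _ fun a => ?_
  rw [mem_filter, Fintype.mem_piFinset]
  simp only [mem_Icc, abs_le, IsEisAt]

open Classical in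
/-- The number of coefficient vectors in the box `[-H, H]^(d+1)` all of whose coordinates satisfy
`CoordCond d s`. -/
noncomputable def sieveCount (d H s : ℕ) : ℕ :=
  #{a ∈ Fintype.piFinset fun _ : Fin (d + 1) => Icc (-(H : ℤ)) H | ∀ i, CoordCond d s i (a i)}

open Classical in
theorem Fcount_add_sum (d H : ℕ) (hd : 0 < d) (hH : 1 ≤ H) :
    ((#{a ∈ Fintype.piFinset fun _ : Fin (d + 1) => Icc (-(H : ℤ)) H |
      ∃ p : ℕ, p.Prime ∧ IsEisAt d p a} : ℕ) : ℤ) + ∑ s ∈ Icc 1 H, μ s * sieveCount d H s =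
        (2 * H + 1) ^ (d + 1) := by
  have h1 : ∑ s ∈ Icc 1 H, μ s * sieveCount d H s =
      ∑ a ∈ Fintype.piFinset fun _ : Fin (d + 1) => Icc (-(H : ℤ)) H,
        if ∃ p : ℕ, p.Prime ∧ IsEisAt d p a then 0 else 1 := by
    rw [← Finset.sum_congr rfl fun a ha => sum_moebius_coordCond d H hd hH a (by
      have := mem_Icc.1 (Fintype.mem_piFinset.1 ha 0)
      omega), Finset.sum_comm]
    refine Finset.sum_congr rfl fun s _ => ?_
    rw [← Finset.sum_filter, Finset.sum_const, nsmul_eq_mul, mul_comm, sieveCount]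
  rw [h1, Finset.card_filter]
  push_cast
  rw [← Finset.sum_add_distrib]
  have : ∀ a ∈ Fintype.piFinset fun _ : Fin (d + 1) => Icc (-(H : ℤ)) H,
      ((if ∃ p : ℕ, p.Prime ∧ IsEisAt d p a then (1 : ℤ) else 0) +
        if ∃ p : ℕ, p.Prime ∧ IsEisAt d p a then 0 else 1) = 1 := by
    intro a _; split_ifs <;> rfl
  rw [Finset.sum_congr rfl this, Finset.sum_const, Fintype.card_piFinset]
  simp only [Int.card_Icc, prod_const, card_univ, Fintype.card_fin, nsmul_eq_mul, mul_one]
  have : ((H : ℤ) + 1 - -(H : ℤ)).toNat = 2 * H + 1 := by omega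
  rw [this]; push_cast; rfl

open Classical in
theorem sieveCount_eq (n H s : ℕ) :
    sieveCount (n + 2) H s =
      #{x ∈ Icc (-(H : ℤ)) H | (s : ℤ) ∣ x ∧ Nat.Coprime (x / s).natAbs s} *
      #{x ∈ Icc (-(H : ℤ)) H | (s : ℤ) ∣ x} ^ (n + 1) *
      #{x ∈ Icc (-(H : ℤ)) H | Nat.Coprime x.natAbs s} := by
  have : {a ∈ Fintype.piFinset fun _ : Fin (n + 2 + 1) => Icc (-(H : ℤ)) H |
      ∀ i, CoordCond (n + 2) s i (a i)} =
      Fintype.piFinset fun i => {x ∈ Icc (-(H : ℤ)) H | CoordCond (n + 2) s i x} := by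
    ext a
    simp only [mem_filter, Fintype.mem_piFinset, forall_and]
  rw [sieveCount, this, Fintype.card_piFinset, Fin.prod_univ_succ, Fin.prod_univ_castSucc, mul_assoc]
  congr 1
  · congr 1; ext x; simp [CoordCond]
  congr 1
  · rw [Finset.prod_eq_pow_card (b := #{x ∈ Icc (-(H : ℤ)) H | (s : ℤ) ∣ x})]
    · simp
    · intro i _
      congr 1; ext x
      have h1 : (i.castSucc.succ : Fin (n + 2 + 1)) ≠ 0 := Fin.succ_ne_zero _
      have h2 : (i.castSucc.succ : Fin (n + 2 + 1)) ≠ Fin.last _ := by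
        intro h; have := congrArg Fin.val h; simp at this; omega
      simp [CoordCond, h1, h2]
  · congr 1; ext x; simp [CoordCond]

/-! ### Perturbing the product of the one-dimensional counts -/

/-- Replacing the three kinds of factors of `c₀ * c ^ m * l` one at a time by their approximations
`2hr`, `2h` and `2Hr`. In the application `h = H / s`, `r = φ(s) / s` and `τ` is the number of
divisors of `s`. -/
theorem product_estimate (m : ℕ) (hm : 1 ≤ m) {h H r τ c₀ c l : ℝ} (hh : 1 ≤ h) (hhH : h ≤ H)
    (hr0 : 0 ≤ r) (hr1 : r ≤ 1) (hτ : 1 ≤ τ) (hc : 0 ≤ c) (hl : 0 ≤ l) (hl3 : l ≤ 3 * H)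
    (e₀ : |c₀ - 2 * h * r| ≤ τ + 2) (e₁ : |c - 2 * h| ≤ 1) (e₂ : |l - 2 * H * r| ≤ τ) :
    |c₀ * c ^ m * l - 2 * h * r * (2 * h) ^ m * (2 * H * r)| ≤
      ((9 + 6 * m) * 3 ^ m + 2 * 2 ^ m) * (τ * (h ^ m * H)) := by
  have hH : 0 ≤ H := by linarith
  have hc3 : c ≤ 3 * h := by linarith [(abs_le.1 e₁).2]
  have t1 : |(c₀ - 2 * h * r) * c ^ m * l| ≤ 3 * τ * (3 * h) ^ m * (3 * H) := by
    rw [abs_mul, abs_mul, abs_of_nonneg hl, abs_of_nonneg (pow_nonneg hc m)]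
    gcongr
    linarith
  have t2 : |2 * h * r * (c ^ m - (2 * h) ^ m) * l| ≤
      2 * h * 1 * (1 * m * (3 * h) ^ (m - 1)) * (3 * H) := by
    rw [abs_mul, abs_mul, abs_of_nonneg hl, abs_of_nonneg (by positivity : 0 ≤ 2 * h * r)]
    gcongr
    refine (abs_pow_sub_pow_le ..).trans ?_
    gcongr
    rw [abs_of_nonneg hc, abs_of_nonneg (by linarith)]
    exact max_le hc3 (by linarith)
  have t3 : |2 * h * r * (2 * h) ^ m * (l - 2 * H * r)| ≤ 2 * H * 1 * (2 * h) ^ m * τ := by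
    rw [abs_mul, abs_of_nonneg (by positivity : 0 ≤ 2 * h * r * (2 * h) ^ m)]
    gcongr
  have t2' : 2 * h * 1 * (1 * m * (3 * h) ^ (m - 1)) * (3 * H) ≤ 6 * m * 3 ^ m * (τ * (h ^ m * H)) := by
    obtain ⟨k, rfl⟩ : ∃ k, m = k + 1 := ⟨m - 1, by omega⟩
    have : 2 * h * 1 * (1 * ((k + 1 : ℕ) : ℝ) * (3 * h) ^ (k + 1 - 1)) * (3 * H) =
        6 * ((k + 1 : ℕ) : ℝ) * 3 ^ k * (1 * (h ^ (k + 1) * H)) := by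
      rw [Nat.add_sub_cancel]; ring
    rw [this]
    gcongr
    · norm_num
    · omega
  -- telescoping: first `c₀`, then `c ^ m`, then `l` is replaced by its approximation
  calc _ = |(c₀ - 2 * h * r) * c ^ m * l + 2 * h * r * (c ^ m - (2 * h) ^ m) * l +
        2 * h * r * (2 * h) ^ m * (l - 2 * H * r)| := by congr 1; ring
    _ ≤ 3 * τ * (3 * h) ^ m * (3 * H) + 6 * m * 3 ^ m * (τ * (h ^ m * H)) +
        2 * H * 1 * (2 * h) ^ m * τ := (abs_add_three _ _ _).trans (by linarith)
    _ = _ := by ring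

/-! ### The series of main terms and its Euler product -/

/-- The `s`-th term `μ(s) φ(s)² / s^(d+2)` of the series whose Euler product is `1 - ρ_d`; it is
`0` at `s = 0` because `μ 0 = 0`. -/
noncomputable def eisTerm (d s : ℕ) : ℝ := μ s * (s.totient : ℝ) ^ 2 / (s : ℝ) ^ (d + 2)

theorem summable_sqrt_div_sq : Summable fun s : ℕ => √(s : ℝ) / (s : ℝ) ^ 2 := by
  refine (Real.summable_nat_rpow (p := -(3 / 2))).2 (by norm_num) |>.congr fun s => ?_
  rcases Nat.eq_zero_or_pos s with rfl | hs
  · norm_num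
  · have : (0 : ℝ) < s := by exact_mod_cast hs
    rw [Real.sqrt_eq_rpow, ← Real.rpow_natCast, ← Real.rpow_sub this]
    norm_num

theorem abs_eisTerm_le (d s : ℕ) : |eisTerm d s| ≤ 1 / (s : ℝ) ^ d := by
  rcases Nat.eq_zero_or_pos s with rfl | hs
  · simp [eisTerm]
  have hs' : (0 : ℝ) < s := by exact_mod_cast hs
  have hm : |(μ s : ℝ)| ≤ 1 := by exact_mod_cast abs_moebius_le_one (n := s)
  have hφ : (s.totient : ℝ) ≤ s := by exact_mod_cast Nat.totient_le s
  rw [eisTerm, abs_div, abs_mul, abs_of_nonneg (by positivity : (0 : ℝ) ≤ (s.totient : ℝ) ^ 2),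
    abs_of_pos (by positivity : (0 : ℝ) < (s : ℝ) ^ (d + 2))]
  calc |(μ s : ℝ)| * (s.totient : ℝ) ^ 2 / (s : ℝ) ^ (d + 2)
      ≤ 1 * (s : ℝ) ^ 2 / (s : ℝ) ^ (d + 2) := by gcongr
    _ = 1 / (s : ℝ) ^ d := by rw [pow_add]; field_simp

theorem inv_pow_le_sqrt_div_sq {d s : ℕ} (hd : 2 ≤ d) (hs : 0 < s) :
    1 / (s : ℝ) ^ d ≤ √(s : ℝ) / (s : ℝ) ^ 2 := by
  have hs' : (1 : ℝ) ≤ s := by exact_mod_cast hs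
  gcongr
  exact Real.one_le_sqrt.2 hs'

theorem summable_eisTerm (d : ℕ) (hd : 2 ≤ d) : Summable (eisTerm d) := by
  refine Summable.of_norm_bounded summable_sqrt_div_sq fun s => ?_
  rcases Nat.eq_zero_or_pos s with rfl | hs
  · simp [eisTerm]
  · exact (abs_eisTerm_le d s).trans (inv_pow_le_sqrt_div_sq hd hs)

theorem tprod_eq_tsum_eisTerm (d : ℕ) (hd : 2 ≤ d) :
    ∏' p : Nat.Primes, (1 - (((p : ℕ) : ℝ) - 1) ^ 2 / ((p : ℕ) : ℝ) ^ (d + 2)) =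
      ∑' s, eisTerm d s := by
  have h := EulerProduct.eulerProduct_hasProd (f := eisTerm d) (by simp [eisTerm])
    (fun {m n} hmn => by
      simp only [eisTerm, isMultiplicative_moebius.map_mul_of_coprime hmn, Nat.totient_mul hmn]
      push_cast
      rw [mul_pow, mul_pow, mul_mul_mul_comm, mul_div_mul_comm])
    (summable_eisTerm d hd).norm (by simp [eisTerm])
  rw [← h.tprod_eq]
  refine tprod_congr fun p => ?_
  rw [tsum_eq_sum (s := range 2)]
  · have hp : 1 ≤ (p : ℕ) := p.prop.one_lt.le
    rw [sum_range_succ, sum_range_one, pow_zero, pow_one]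
    simp only [eisTerm, moebius_apply_prime p.prop, Nat.totient_prime p.prop]
    push_cast [hp]
    simp
    ring
  · intro e he
    have he' : 2 ≤ e := by simpa [Nat.succ_le_iff] using he
    have : μ ((p : ℕ) ^ e) = 0 := by
      rw [moebius_apply_prime_pow p.prop (by omega), if_neg (by omega)]
    simp [eisTerm, this]

/-! ### Error terms -/

/-- The approximation of `μ(s) N(s, H)` for `s ≤ H`, in dimension `d = n + 3`; the weight `s^(n+2)`
in the denominator is weakened to `s²` to make the bound summable uniformly in `d`. -/
theorem abs_sieveCount_sub_le (n H s : ℕ) (hs : 0 < s) (hsH : s ≤ H) :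
    |μ s * (sieveCount (n + 3) H s : ℝ) - (2 * H) ^ (n + 4) * eisTerm (n + 3) s| ≤
      2 * ((9 + 6 * (n + 2)) * 3 ^ (n + 2) + 2 * 2 ^ (n + 2)) * H ^ (n + 3) *
        (√(s : ℝ) / (s : ℝ) ^ 2) := by
  classical
  have hs' : (0 : ℝ) < s := by exact_mod_cast hs
  have hs1 : (1 : ℝ) ≤ s := by exact_mod_cast hs
  have hH1 : (1 : ℝ) ≤ H := by exact_mod_cast hs.trans_le hsH
  have hm : |(μ s : ℝ)| ≤ 1 := by exact_mod_cast abs_moebius_le_one (n := s)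
  have hr1 : (s.totient : ℝ) / s ≤ 1 :=
    (div_le_one hs').2 (by exact_mod_cast Nat.totient_le s)
  have hr0 : 0 ≤ (s.totient : ℝ) / s := by positivity
  have hτ1 : (1 : ℝ) ≤ #s.divisors := by
    exact_mod_cast Finset.card_pos.2 ⟨1, Nat.one_mem_divisors.2 hs.ne'⟩
  have e₀ : |(#{x ∈ Icc (-(H : ℤ)) H | (s : ℤ) ∣ x ∧ Nat.Coprime (x / s).natAbs s} : ℝ) -
      2 * ((H : ℝ) / s) * (s.totient / s)| ≤ #s.divisors + 2 := by
    rw [card_multiples H s hs (fun k => Nat.Coprime k.natAbs s)]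
    have h1 := abs_card_coprime_sub_le (H / s) s hs
    have h2 : |2 * ((H / s : ℕ) : ℝ) * (s.totient / s) - 2 * ((H : ℝ) / s) * (s.totient / s)| ≤ 2 := by
      rw [← sub_mul, ← mul_sub, abs_mul, abs_mul, abs_two, abs_of_nonneg hr0]
      have h3 : |((H / s : ℕ) : ℝ) - (H : ℝ) / s| ≤ 1 := by
        rw [← Nat.floor_div_eq_div (K := ℝ) H s]
        have h4 := Nat.floor_le (a := (H : ℝ) / s) (by positivity)
        have h5 := Nat.lt_floor_add_one ((H : ℝ) / s)
        rw [abs_le]; constructor <;> linarith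
      calc _ ≤ 2 * (1 : ℝ) * 1 := by gcongr
        _ = 2 := by norm_num
    exact (abs_sub_le _ _ _).trans (add_le_add h1 h2)
  have e₁ := abs_card_dvd_sub_le H s hs
  have e₂ := abs_card_coprime_sub_le H s hs
  have hl3 : (#{x ∈ Icc (-(H : ℤ)) H | Nat.Coprime x.natAbs s} : ℝ) ≤ 3 * H := by
    have h1 := card_filter_le (Icc (-(H : ℤ)) H) (fun x => Nat.Coprime x.natAbs s)
    rw [Int.card_Icc] at h1
    have h2 : #{x ∈ Icc (-(H : ℤ)) H | Nat.Coprime x.natAbs s} ≤ 3 * H := by omega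
    exact_mod_cast h2
  have key := product_estimate (n + 2) (by omega) (h := (H : ℝ) / s) (H := H)
    ((one_le_div hs').2 (by exact_mod_cast hsH)) (div_le_self (by positivity) hs1)
    hr0 hr1 hτ1 (Nat.cast_nonneg _) (Nat.cast_nonneg _) hl3 e₀ e₁ e₂
  have hmain : (2 * (H : ℝ)) ^ (n + 4) * eisTerm (n + 3) s =
      μ s * (2 * ((H : ℝ) / s) * (s.totient / s) * (2 * ((H : ℝ) / s)) ^ (n + 2) *
        (2 * H * (s.totient / s))) := by
    rw [eisTerm, mul_pow 2 ((H : ℝ) / s), div_pow]; field_simp; ring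
  rw [hmain, sieveCount_eq, ← mul_sub, abs_mul]
  push_cast at key ⊢
  refine (mul_le_of_le_one_left (abs_nonneg _) hm).trans (key.trans ?_)
  have hτ := card_divisors_le_sqrt s
  calc _ ≤ ((9 + 6 * ((n : ℝ) + 2)) * 3 ^ (n + 2) + 2 * 2 ^ (n + 2)) *
        (2 * √(s : ℝ) * (((H : ℝ) ^ (n + 2) / (s : ℝ) ^ 2) * H)) := by
        rw [div_pow]
        gcongr
        omega
    _ = _ := by ring

/-- For `s > H` one factor `H` of the main term may be traded for a factor `s`. -/
theorem abs_main_term_le (d H s : ℕ) (hd : 3 ≤ d) (hsH : H < s) :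
    |(2 * (H : ℝ)) ^ (d + 1) * eisTerm d s| ≤
      2 ^ (d + 1) * H ^ d * (√(s : ℝ) / (s : ℝ) ^ 2) := by
  obtain ⟨k, rfl⟩ : ∃ k, d = k + 1 := ⟨d - 1, by omega⟩
  have hs : 0 < s := by omega
  have hs' : (0 : ℝ) < s := by exact_mod_cast hs
  have hle : (H : ℝ) ≤ s := by exact_mod_cast hsH.le
  rw [abs_mul, abs_of_nonneg (by positivity : (0 : ℝ) ≤ (2 * (H : ℝ)) ^ (k + 1 + 1))]
  calc _ ≤ (2 * (H : ℝ)) ^ (k + 1 + 1) * (1 / (s : ℝ) ^ (k + 1)) := by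
        gcongr; exact abs_eisTerm_le _ _
    _ = 2 ^ (k + 1 + 1) * H ^ (k + 1) * (H * (1 / (s : ℝ) ^ (k + 1))) := by ring
    _ ≤ 2 ^ (k + 1 + 1) * H ^ (k + 1) * (s * (1 / (s : ℝ) ^ (k + 1))) := by gcongr
    _ = 2 ^ (k + 1 + 1) * H ^ (k + 1) * (1 / (s : ℝ) ^ k) := by
        congr 1; rw [pow_succ]; field_simp
    _ ≤ _ := by
        gcongr ?_ * ?_
        exact inv_pow_le_sqrt_div_sq (d := k) (by omega) hs

theorem two_mul_add_one_pow_sub_le (d H : ℕ) (hH : 1 ≤ H) :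
    |(2 * (H : ℝ) + 1) ^ (d + 1) - (2 * H) ^ (d + 1)| ≤ (d + 1) * 3 ^ d * (H : ℝ) ^ d := by
  have hH1 : (1 : ℝ) ≤ H := by exact_mod_cast hH
  refine (abs_pow_sub_pow_le ..).trans ?_
  rw [add_sub_cancel_left, abs_one, one_mul, Nat.add_sub_cancel, mul_assoc, ← mul_pow]
  push_cast
  gcongr
  rw [abs_of_nonneg (by positivity), abs_of_nonneg (by positivity)]
  exact max_le (by linarith) (by linarith)

end

open Finset ArithmeticFunction
open scoped ArithmeticFunction.Moebius

theorem eisenstein_count_asymptotic (d : ℕ) (hd : 2 < d) :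
    ∃ C : ℝ, ∀ H : ℕ, 1 ≤ H →
      |(Fcount d H : ℝ) - rho d * 2 ^ (d + 1) * (H : ℝ) ^ (d + 1)| ≤ C * (H : ℝ) ^ d := by
  classical
  obtain ⟨n, rfl⟩ : ∃ n, d = n + 3 := ⟨d - 3, by omega⟩
  set K : ℝ := 2 * ((9 + 6 * (n + 2)) * 3 ^ (n + 2) + 2 * 2 ^ (n + 2)) + 2 ^ (n + 4) with hK
  set S : ℝ := ∑' s : ℕ, √(s : ℝ) / (s : ℝ) ^ 2 with hS
  refine ⟨((n + 3 : ℕ) + 1) * 3 ^ (n + 3) + K * S, fun H hH => ?_⟩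
  have hcount : (Fcount (n + 3) H : ℝ) + ∑ s ∈ Icc 1 H, μ s * (sieveCount (n + 3) H s : ℝ) =
      (2 * H + 1) ^ (n + 4) := by
    have := Fcount_add_sum (n + 3) H (by omega) hH
    rw [← Fcount_eq] at this
    exact_mod_cast this
  have hrho : 1 - rho (n + 3) = ∑' s, eisTerm (n + 3) s := by
    rw [rho, tprod_eq_tsum_eisTerm _ (by omega)]; ring
  -- the truncated sieve sum minus the full series of main terms, as one series over all `s`
  set Δ : ℕ → ℝ := fun s => (if s ∈ Icc 1 H then μ s * (sieveCount (n + 3) H s : ℝ) else 0) -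
    (2 * H) ^ (n + 4) * eisTerm (n + 3) s with hΔ
  have hsum : HasSum Δ (∑ s ∈ Icc 1 H, μ s * (sieveCount (n + 3) H s : ℝ) -
      (2 * H) ^ (n + 4) * (1 - rho (n + 3))) := by
    rw [hrho]
    refine HasSum.sub ?_ ((summable_eisTerm (n + 3) (by omega)).hasSum.mul_left _)
    have h : HasSum (fun s => if s ∈ Icc 1 H then μ s * (sieveCount (n + 3) H s : ℝ) else 0)
        (∑ s ∈ Icc 1 H, if s ∈ Icc 1 H then μ s * (sieveCount (n + 3) H s : ℝ) else 0) :=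
      hasSum_sum_of_ne_finset_zero fun s hs => if_neg hs
    rwa [Finset.sum_congr rfl fun s hs => if_pos hs] at h
  have hbound : ∀ s, ‖Δ s‖ ≤ K * H ^ (n + 3) * (√(s : ℝ) / (s : ℝ) ^ 2) := by
    intro s
    rw [Real.norm_eq_abs]
    rcases Nat.eq_zero_or_pos s with rfl | hs
    · simp [hΔ, eisTerm]
    rcases le_or_gt s H with hsH | hsH
    · simp only [hΔ, if_pos (mem_Icc.2 ⟨hs, hsH⟩)]
      refine (abs_sieveCount_sub_le n H s hs hsH).trans ?_
      gcongr
      rw [hK]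
      exact le_add_of_nonneg_right (by positivity)
    · have : s ∉ Icc 1 H := fun h => hsH.not_ge (mem_Icc.1 h).2
      simp only [hΔ, if_neg this, zero_sub, abs_neg]
      refine (abs_main_term_le (n + 3) H s (by omega) hsH).trans ?_
      gcongr
      rw [hK]
      exact le_add_of_nonneg_left (by positivity)
  have hΔle := tsum_of_norm_bounded (summable_sqrt_div_sq.hasSum.mul_left (K * (H : ℝ) ^ (n + 3))) hbound
  rw [hsum.tsum_eq, Real.norm_eq_abs, ← hS] at hΔle
  have hbox := two_mul_add_one_pow_sub_le (n + 3) H hH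
  have hsplit : (Fcount (n + 3) H : ℝ) - rho (n + 3) * 2 ^ (n + 3 + 1) * (H : ℝ) ^ (n + 3 + 1) =
      ((2 * (H : ℝ) + 1) ^ (n + 3 + 1) - (2 * H) ^ (n + 3 + 1)) -
        (∑ s ∈ Icc 1 H, μ s * (sieveCount (n + 3) H s : ℝ) -
          (2 * H) ^ (n + 4) * (1 - rho (n + 3))) := by
    rw [← hcount]; ring
  rw [hsplit]
  refine (abs_sub _ _).trans ((add_le_add hbox hΔle).trans_eq ?_)
  ring
end

section
/- For every integer d ≥ 2 there exists a constant C (depending only on d) such that for all integers s, H with 1 ≤ s ≤ H, |#H_d(s,H) − 2^{d+1} H^{d+1} φ(s)²/s^{d+2}| ≤ C · H^d · 2^{ω(s)} / s^{d−1}. -/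
/-!
The coefficient conditions are independent, so `Hcount d s H` is the product of
the number `A` of `|z| ≤ H` coprime to `s` (leading coefficient), the number `B₀` of `|w| ≤ H / s`
coprime to `s` (constant coefficient divided by `s`), and `d - 1` copies of the number
`B = 2 ⌊H / s⌋ + 1` of multiples of `s` (middle coefficients).

The sieve lemma `abs_sifted_sub_le` shows that the number of integers `|z| ≤ x` divisible by no
prime of a finite set `P` is `2 x ∏ (1 - 1/p)` up to an error of at most `2 ^ #P`. It goes by
induction on `P`: inserting `p` removes the multiples of `p`, which are counted by the same
quantity at `x / p`, so the error at most doubles. Working with a real `x` is what makes the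
induction close, since `⌊⌊x⌋ / p⌋ = ⌊x / p⌋`. For `P` the set of primes dividing `s`, the main term
is `2 x φ(s) / s` and the error is `2 ^ ω(s)`. Replacing the factors of `A * B₀ * B ^ (d - 1)` one
at a time by their main terms yields the result (`abs_prod_sub_le`).
-/

/-- `#H_d(s,H)`: the number of integer polynomials
`a_d X^d + ⋯ + a_1 X + a_0` of height at most `H` such that `s ∣ a_i` for
`0 ≤ i ≤ d-1`, `gcd(a_0/s, s) = 1` and `gcd(a_d, s) = 1`.
Represented by coefficient vectors `a : Fin (d+1) → ℤ`. -/
noncomputable def Hcount (d s H : ℕ) : ℕ :=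
  Nat.card {a : Fin (d + 1) → ℤ //
    (∀ i : Fin (d + 1), |a i| ≤ (H : ℤ)) ∧
    (∀ i : Fin (d + 1), i.val < d → (s : ℤ) ∣ a i) ∧
    Int.gcd (a 0 / (s : ℤ)) (s : ℤ) = 1 ∧
    Int.gcd (a (Fin.last d)) (s : ℤ) = 1}

/-- Multiples of `k` in `[-n, n]` correspond to their quotients in `[-⌊n / k⌋, ⌊n / k⌋]`. -/
lemma card_filter_dvd_Icc (n k : ℕ) (hk : 0 < k) (Q : ℤ → Prop) [DecidablePred Q] :
    ((Finset.Icc (-(n : ℤ)) n).filter (fun z => (k : ℤ) ∣ z ∧ Q (z / k))).card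
      = ((Finset.Icc (-((n / k : ℕ) : ℤ)) ((n / k : ℕ) : ℤ)).filter Q).card := by
  have hk' : (0 : ℤ) < k := by exact_mod_cast hk
  have key : ∀ w : ℤ, (-(n : ℤ) ≤ k * w ∧ k * w ≤ n) ↔
      (-((n / k : ℕ) : ℤ) ≤ w ∧ w ≤ ((n / k : ℕ) : ℤ)) := by
    intro w
    push_cast
    rw [neg_le (b := w), Int.le_ediv_iff_mul_le hk', Int.le_ediv_iff_mul_le hk']
    constructor <;> rintro ⟨h1, h2⟩ <;> constructor <;> linarith
  symm
  refine Finset.card_bij (fun w _ => (k : ℤ) * w) ?_ ?_ ?_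
  · intro w hw
    simp only [Finset.mem_filter, Finset.mem_Icc] at hw ⊢
    refine ⟨(key w).2 hw.1, dvd_mul_right _ _, ?_⟩
    rw [Int.mul_ediv_cancel_left _ hk'.ne']
    exact hw.2
  · intro a _ b _ h
    exact mul_left_cancel₀ hk'.ne' h
  · intro z hz
    simp only [Finset.mem_filter, Finset.mem_Icc] at hz
    obtain ⟨hz1, ⟨w, rfl⟩, hQ⟩ := hz
    rw [Int.mul_ediv_cancel_left _ hk'.ne'] at hQ
    refine ⟨w, ?_, rfl⟩
    simp only [Finset.mem_filter, Finset.mem_Icc]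
    exact ⟨(key w).1 hz1, hQ⟩

/-- The number of integers in `[-n, n]` divisible by no element of `P`. -/
noncomputable def sifted (P : Finset ℕ) (n : ℕ) : ℕ :=
  ((Finset.Icc (-(n : ℤ)) n).filter (fun z => ∀ q ∈ P, ¬ (q : ℤ) ∣ z)).card

lemma sifted_empty (n : ℕ) : sifted ∅ n = 2 * n + 1 := by
  simp [sifted]
  omega

/-- Of the integers sifted by `P`, those divisible by a further prime `p` are `p` times the
integers sifted by `P` in the interval shrunk by the factor `p`. -/
lemma sifted_insert (P : Finset ℕ) (hP : ∀ q ∈ P, q.Prime) (p : ℕ) (hp : p.Prime) (hpP : p ∉ P)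
    (n : ℕ) : sifted (insert p P) n + sifted P (n / p) = sifted P n := by
  have h := card_filter_dvd_Icc n p hp.pos (fun z => ∀ q ∈ P, ¬ (q : ℤ) ∣ z)
  unfold sifted
  rw [← h, ← Finset.card_filter_add_card_filter_not
    (s := (Finset.Icc (-(n : ℤ)) n).filter (fun z => ∀ q ∈ P, ¬ (q : ℤ) ∣ z))
    (fun z => (p : ℤ) ∣ z), add_comm]
  congr 1
  · rw [Finset.filter_filter]
    congr 1
    ext z
    simp only [Finset.mem_filter]
    refine and_congr_right fun _ => ?_
    rw [and_comm]
    refine and_congr_left ?_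
    rintro ⟨w, rfl⟩
    rw [Int.mul_ediv_cancel_left _ (by exact_mod_cast hp.ne_zero)]
    refine forall₂_congr fun q hq => not_congr ?_
    constructor
    · intro h; exact h.mul_left _
    · intro h
      refine ((Nat.prime_iff_prime_int.1 (hP q hq)).dvd_or_dvd h).resolve_left fun h' => hpP ?_
      rw [Int.natCast_dvd_natCast, Nat.prime_dvd_prime_iff_eq (hP q hq) hp] at h'
      exact h' ▸ hq
  · rw [Finset.filter_filter]
    congr 1
    ext z
    simp only [Finset.mem_filter, Finset.mem_insert, forall_eq_or_imp]
    tauto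

/-- Legendre's sieve for the symmetric interval `[-x, x]`. -/
lemma abs_sifted_sub_le (P : Finset ℕ) (hP : ∀ q ∈ P, q.Prime) (x : ℝ) (hx : 0 ≤ x) :
    |(sifted P ⌊x⌋₊ : ℝ) - 2 * x * ∏ p ∈ P, (1 - (p : ℝ)⁻¹)| ≤ 2 ^ P.card := by
  induction P using Finset.induction_on generalizing x with
  | empty =>
    rw [sifted_empty, abs_le]
    have h1 := Nat.floor_le hx
    have h2 := Nat.lt_floor_add_one x
    push_cast
    simp only [Finset.prod_empty, Finset.card_empty, pow_zero]
    constructor <;> linarith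
  | insert p P hpP ih =>
    have hP' : ∀ q ∈ P, q.Prime := fun q hq => hP q (Finset.mem_insert_of_mem hq)
    have hp : p.Prime := hP p (Finset.mem_insert_self _ _)
    have h1 := ih hP' x hx
    have h2 := ih hP' (x / p) (by positivity)
    have h3 := sifted_insert P hP' p hp hpP ⌊x⌋₊
    rw [Nat.floor_div_natCast] at h2
    rw [← h3, Nat.cast_add] at h1
    rw [Finset.prod_insert hpP, Finset.card_insert_of_notMem hpP, pow_succ]
    have e : (sifted (insert p P) ⌊x⌋₊ : ℝ)
          - 2 * x * ((1 - (p : ℝ)⁻¹) * ∏ p ∈ P, (1 - (p : ℝ)⁻¹))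
        = ((sifted (insert p P) ⌊x⌋₊ : ℝ) + sifted P (⌊x⌋₊ / p)
            - 2 * x * ∏ p ∈ P, (1 - (p : ℝ)⁻¹))
          - (sifted P (⌊x⌋₊ / p) - 2 * (x / p) * ∏ p ∈ P, (1 - (p : ℝ)⁻¹)) := by
      rw [div_eq_mul_inv]; ring
    rw [e]
    refine (abs_sub _ _).trans ?_
    linarith

lemma int_gcd_eq_one_iff (s : ℕ) (hs : s ≠ 0) (z : ℤ) :
    Int.gcd z s = 1 ↔ ∀ q ∈ s.primeFactors, ¬ (q : ℤ) ∣ z := by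
  have : Int.gcd z s = Nat.gcd z.natAbs s := by simp [Int.gcd]
  rw [this, ← Nat.coprime_iff_gcd_eq_one]
  constructor
  · intro h q hq hqz
    have hq' := Nat.prime_of_mem_primeFactors hq
    exact Nat.Prime.not_coprime_iff_dvd.2
      ⟨q, hq', Int.natCast_dvd.1 hqz, Nat.dvd_of_mem_primeFactors hq⟩ h
  · intro h
    by_contra hc
    obtain ⟨q, hq, h1, h2⟩ := Nat.Prime.not_coprime_iff_dvd.1 hc
    exact h q (Nat.mem_primeFactors.2 ⟨hq, h2, hs⟩) (Int.natCast_dvd.2 h1)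

lemma abs_sifted_primeFactors_sub_le (s : ℕ) (hs : s ≠ 0) (x : ℝ) (hx : 0 ≤ x) :
    |(sifted s.primeFactors ⌊x⌋₊ : ℝ) - 2 * x * ((s.totient : ℝ) / s)|
      ≤ 2 ^ s.primeFactors.card := by
  have h := abs_sifted_sub_le s.primeFactors (fun q hq => Nat.prime_of_mem_primeFactors hq) x hx
  have ht : (s.totient : ℝ) = s * ∏ p ∈ s.primeFactors, (1 - (p : ℝ)⁻¹) := by
    have h := congrArg (Rat.cast : ℚ → ℝ) (Nat.totient_eq_mul_prod_factors s)
    push_cast at h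
    exact h
  rwa [ht, mul_div_cancel_left₀ _ (by exact_mod_cast hs)]

/-- The coefficients are subject to independent conditions, so their counts multiply. -/
lemma Hcount_eq (m s H : ℕ) (hs : s ≠ 0) :
    Hcount (m + 1) s H = sifted s.primeFactors (H / s) *
      (sifted ∅ (H / s) ^ m * sifted s.primeFactors H) := by
  classical
  let S : Fin (m + 2) → Finset ℤ := fun i => (Finset.Icc (-(H : ℤ)) H).filter (fun z =>
    (i.val < m + 1 → (s : ℤ) ∣ z) ∧ (i = 0 → Int.gcd (z / s) s = 1) ∧
      (i = Fin.last (m + 1) → Int.gcd z s = 1))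
  have h1 : Hcount (m + 1) s H = (Fintype.piFinset S).card := by
    unfold Hcount
    rw [Nat.subtype_card]
    intro a
    simp only [S, Fintype.mem_piFinset, Finset.mem_filter, Finset.mem_Icc, abs_le]
    constructor
    · intro h
      exact ⟨fun i => (h i).1, fun i => (h i).2.1, (h 0).2.2.1 rfl, (h _).2.2.2 rfl⟩
    · rintro ⟨h1, h2, h3, h4⟩ i
      exact ⟨h1 i, h2 i, by rintro rfl; exact h3, by rintro rfl; exact h4⟩
  rw [h1, Fintype.card_piFinset, Fin.prod_univ_succ, Fin.prod_univ_castSucc]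
  have hs' : 0 < s := Nat.pos_of_ne_zero hs
  have e0 : (S 0).card = sifted s.primeFactors (H / s) := by
    unfold sifted
    rw [← card_filter_dvd_Icc H s hs']
    congr 1
    refine Finset.filter_congr fun z _ => ?_
    simp [int_gcd_eq_one_iff s hs, Fin.ext_iff]
  have e1 : ∀ i : Fin m, (S i.castSucc.succ).card = sifted ∅ (H / s) := by
    intro i
    unfold sifted
    rw [← card_filter_dvd_Icc H s hs']
    congr 1
    refine Finset.filter_congr fun z _ => ?_
    have := i.2
    simp [Fin.ext_iff, this.ne]
  have e2 : (S (Fin.last m).succ).card = sifted s.primeFactors H := by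
    unfold sifted
    congr 1
    refine Finset.filter_congr fun z _ => ?_
    simp [int_gcd_eq_one_iff s hs, Fin.ext_iff]
  rw [e0, e2, Finset.prod_congr rfl fun i _ => e1 i]
  simp

/-- Replaces the three kinds of factors by their main terms. Here `u` stands for `H / s`, `t` for
`φ(s) / s` and `W` for `2 ^ ω(s)`. -/
lemma abs_prod_sub_le (m : ℕ) (A B₀ B H u t W : ℝ) (hu : 1 ≤ u) (huH : u ≤ H)
    (ht0 : 0 ≤ t) (ht1 : t ≤ 1) (hW : 1 ≤ W) (hA : |A - 2 * H * t| ≤ W)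
    (hB₀ : |B₀ - 2 * u * t| ≤ W) (hB : |B - 2 * u| ≤ 1) (h0 : 0 ≤ B₀) (h01 : B₀ ≤ B) :
    |B₀ * (B ^ m * A) - 2 * H * t * (2 * u * t) * (2 * u) ^ m|
      ≤ (5 + 4 * m) * 3 ^ m * (H * u ^ m * W) := by
  have hB3 : B ≤ 3 * u := by have := (abs_le.1 hB).2; linarith
  have hBn : 0 ≤ B := h0.trans h01
  have hBm : B ^ m ≤ (3 * u) ^ m := pow_le_pow_left₀ hBn hB3 m
  have hpow : |B ^ m - (2 * u) ^ m| ≤ m * (3 * u) ^ (m - 1) := by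
    refine (abs_pow_sub_pow_le _ _ _).trans ?_
    have hmax : max |B| |2 * u| ≤ 3 * u := by
      rw [abs_of_nonneg hBn, abs_of_nonneg (by linarith)]
      exact max_le hB3 (by linarith)
    calc |B - 2 * u| * m * max |B| |2 * u| ^ (m - 1)
        ≤ 1 * m * (3 * u) ^ (m - 1) := by gcongr
      _ = _ := by ring
  have hH : 1 ≤ H := hu.trans huH
  have hu0 : 0 ≤ u := by linarith
  have hH0 : 0 ≤ H := by linarith
  have hW0 : 0 ≤ W := by linarith
  have hHt : 2 * H * t ≤ 2 * H := mul_le_of_le_one_right (by linarith) ht1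
  have hut : 2 * u * t ≤ 2 * u := mul_le_of_le_one_right (by linarith) ht1
  have hX : 0 ≤ (3 * u) ^ m := by positivity
  have T1 : |(A - 2 * H * t) * B₀ * B ^ m| ≤ W * (3 * H) * (3 * u) ^ m := by
    rw [abs_mul, abs_mul, abs_of_nonneg h0, abs_of_nonneg (pow_nonneg hBn m)]
    have : B₀ ≤ 3 * H := by linarith
    gcongr
  have T2 : |2 * H * t * (B₀ - 2 * u * t) * B ^ m| ≤ 2 * H * W * (3 * u) ^ m := by
    rw [abs_mul, abs_mul, abs_of_nonneg (pow_nonneg hBn m),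
      abs_of_nonneg (show 0 ≤ 2 * H * t by positivity)]
    gcongr
  have T3 : |2 * H * t * (2 * u * t) * (B ^ m - (2 * u) ^ m)| ≤ 4 * m * H * W * (3 * u) ^ m := by
    rw [abs_mul, abs_of_nonneg (show 0 ≤ 2 * H * t * (2 * u * t) by positivity)]
    calc 2 * H * t * (2 * u * t) * |B ^ m - (2 * u) ^ m|
        ≤ 2 * H * (2 * u) * (m * (3 * u) ^ (m - 1)) := by gcongr
      _ ≤ 4 * m * H * (3 * u) ^ m := by
        rcases m with _ | k
        · simp
        · rw [Nat.add_sub_cancel, pow_succ]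
          have : 0 ≤ H * u * ((k + 1 : ℕ) : ℝ) * (3 * u) ^ k := by positivity
          nlinarith
      _ ≤ 4 * m * H * (3 * u) ^ m * W := le_mul_of_one_le_right (by positivity) hW
      _ = _ := by ring
  have e : B₀ * (B ^ m * A) - 2 * H * t * (2 * u * t) * (2 * u) ^ m
      = (A - 2 * H * t) * B₀ * B ^ m + 2 * H * t * (B₀ - 2 * u * t) * B ^ m
        + 2 * H * t * (2 * u * t) * (B ^ m - (2 * u) ^ m) := by ring
  rw [e]
  refine (abs_add_three _ _ _).trans ((add_le_add (add_le_add T1 T2) T3).trans (le_of_eq ?_))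
  rw [mul_pow]
  ring

theorem Hcount_asymptotic (d : ℕ) (hd : 2 ≤ d) :
    ∃ C : ℝ, ∀ s H : ℕ, 1 ≤ s → s ≤ H →
      |(Hcount d s H : ℝ)
          - 2 ^ (d + 1) * (H : ℝ) ^ (d + 1) * (Nat.totient s) ^ 2 / (s : ℝ) ^ (d + 2)|
        ≤ C * (H : ℝ) ^ d * 2 ^ s.primeFactors.card / (s : ℝ) ^ (d - 1) := by
  obtain ⟨m, rfl⟩ : ∃ m, d = m + 1 := ⟨d - 1, by omega⟩
  refine ⟨(5 + 4 * m) * 3 ^ m, fun s H hs hsH => ?_⟩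
  have hs0 : s ≠ 0 := by omega
  have hsR : (0 : ℝ) < s := by exact_mod_cast hs
  have hs1 : (1 : ℝ) ≤ s := by exact_mod_cast hs
  have hsH' : (s : ℝ) ≤ H := by exact_mod_cast hsH
  have hA := abs_sifted_primeFactors_sub_le s hs0 H (by positivity)
  have hB₀ := abs_sifted_primeFactors_sub_le s hs0 (H / s : ℝ) (by positivity)
  have hB := abs_sifted_sub_le ∅ (by simp) (H / s : ℝ) (by positivity)
  rw [Nat.floor_natCast] at hA
  rw [Nat.floor_div_natCast, Nat.floor_natCast] at hB₀ hB
  simp only [Finset.prod_empty, mul_one, Finset.card_empty, pow_zero] at hB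
  have h01 : (sifted s.primeFactors (H / s) : ℝ) ≤ sifted ∅ (H / s) := by
    unfold sifted
    exact_mod_cast Finset.card_le_card (Finset.monotone_filter_right _ fun z _ => by simp)
  have key := abs_prod_sub_le m _ _ _ H (H / s) (s.totient / s) (2 ^ s.primeFactors.card)
    ((one_le_div hsR).2 hsH') (div_le_self (by positivity) hs1) (by positivity)
    ((div_le_one hsR).2 (by exact_mod_cast Nat.totient_le s)) (one_le_pow₀ (by norm_num))
    hA hB₀ hB (by positivity) h01
  rw [Hcount_eq m s H hs0]
  push_cast
  convert key using 1
  · congr 2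
    simp only [mul_pow, div_pow]
    field_simp
    ring
  · simp only [div_pow]
    field_simp
    ring
end
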